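/- arXiv:2501.15124 — 2 statements merged into one kernel-verified Lean document; each statement's English description precedes it below -/
import Mathlib

section
/- Let G be a finite simple graph on n vertices that is triangle-free (contains no K_3 subgraph). If G is not bipartite, then the number of edges of G satisfies 4·e(G) ≤ (n−1)² + 4 (equivalently, e(G) ≤ (n−1)²/4 + 1). -/
/-!
A non-bipartite graph has an odd closed walk; take a shortest one, of length `L`. A walk joining two
of its vertices cannot be shorter than the arc of the same parity between them, since otherwise it
would replace that arc and give a shorter odd closed walk. Applied to walks of length `0`, this
shows that the loop visits `L` distinct vertices; applied to walks of length `2`, that the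
neighbours any vertex has on the loop are pairwise at cyclic distance `2`, so there are at most two
of them when `5 ≤ L`, which triangle-freeness ensures.

Removing the loop leaves a triangle-free graph on `m = n - L` vertices. Mantel's theorem bounds the
number of its edges, and counting the removed edges gives `4 e(G) ≤ m² + 8 m + 4 L`, which is
`(n - (L - 4))² + 4 (L - 4)`. The bound is largest at `L = 5`.
-/

open Finset SimpleGraph

section EdgeCounts

variable {V : Type*} [Fintype V] (G : SimpleGraph V) [DecidableRel G.Adj]

lemma mul_card_edgeFinset_le_of_cliqueFree {r : ℕ} (h : G.CliqueFree (r + 1)) :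
    2 * r * #G.edgeFinset ≤ (r - 1) * Fintype.card V ^ 2 := by
  have turan : #G.edgeFinset ≤ #(turanGraph (Fintype.card V) r).edgeFinset :=
    h.card_edgeFinset_le.trans_eq card_edgeFinset_turanGraph.symm
  grw [turan, mul_card_edgeFinset_turanGraph_le]

variable [DecidableEq V]

lemma sum_card_neighborFinset_inter_comm (S T : Finset V) :
    ∑ v ∈ S, #(G.neighborFinset v ∩ T) = ∑ v ∈ T, #(G.neighborFinset v ∩ S) := by
  simp_rw [card_eq_sum_ones]
  exact sum_comm' (by simp [and_comm, and_left_comm, adj_comm])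

lemma sum_card_neighborFinset_inter_self (S : Finset V) :
    ∑ v ∈ S, #(G.neighborFinset v ∩ S) = 2 * #(G.induce (S : Set V)).edgeFinset := by
  rw [← sum_degrees_eq_twice_card_edges, ← sum_coe_sort S]
  refine sum_congr rfl fun v _ ↦ ?_
  rw [← card_neighborFinset_eq_degree, ← card_map (.subtype (· ∈ S))]
  congr 1
  ext w
  simp

lemma sum_degree_eq_sum_card_neighborFinset_inter (S : Finset V) :
    ∑ v ∈ S, G.degree v = ∑ v, #(G.neighborFinset v ∩ S) := by
  simp [sum_card_neighborFinset_inter_comm G univ S]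

lemma degree_eq_card_inter_add_card_inter_compl (S : Finset V) (v : V) :
    G.degree v = #(G.neighborFinset v ∩ S) + #(G.neighborFinset v ∩ Sᶜ) := by
  rw [← sdiff_eq_inter_compl, card_inter_add_card_sdiff, card_neighborFinset_eq_degree]

variable {G}

lemma two_mul_card_edgeFinset_le_of_card_neighborFinset_inter_le {S : Finset V} {k : ℕ}
    (hS : ∀ v, #(G.neighborFinset v ∩ S) ≤ k) :
    2 * #G.edgeFinset ≤
      k * (Fintype.card V + #Sᶜ) + 2 * #(G.induce ((Sᶜ : Finset V) : Set V)).edgeFinset := by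
  have sum_le (T : Finset V) : ∑ v ∈ T, #(G.neighborFinset v ∩ S) ≤ k * #T := by
    simpa [mul_comm] using sum_le_card_nsmul T _ k fun v _ ↦ hS v
  calc 2 * #G.edgeFinset
      = ∑ v ∈ S, G.degree v + ∑ v ∈ Sᶜ, G.degree v := by
        rw [← sum_degrees_eq_twice_card_edges, sum_add_sum_compl]
    _ = ∑ v, #(G.neighborFinset v ∩ S) + ∑ v ∈ Sᶜ, #(G.neighborFinset v ∩ S)
          + ∑ v ∈ Sᶜ, #(G.neighborFinset v ∩ Sᶜ) := by
        rw [sum_degree_eq_sum_card_neighborFinset_inter, add_assoc, ← sum_add_distrib]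
        simp_rw [← degree_eq_card_inter_add_card_inter_compl]
    _ ≤ k * Fintype.card V + k * #Sᶜ
          + 2 * #(G.induce ((Sᶜ : Finset V) : Set V)).edgeFinset := by
        rw [sum_card_neighborFinset_inter_self]
        gcongr
        · exact sum_le univ
        · exact sum_le Sᶜ
    _ = _ := by rw [mul_add]

lemma four_mul_card_edgeFinset_le_of_card_neighborFinset_inter_le (h : G.CliqueFree 3)
    {S : Finset V} {k : ℕ} (hS : ∀ v, #(G.neighborFinset v ∩ S) ≤ k) :
    4 * #G.edgeFinset ≤ 2 * k * (Fintype.card V + #Sᶜ) + #Sᶜ ^ 2 := by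
  have count := two_mul_card_edgeFinset_le_of_card_neighborFinset_inter_le hS
  have mantel := mul_card_edgeFinset_le_of_cliqueFree (r := 2)
    (G.induce ((Sᶜ : Finset V) : Set V)) (h.comap (Embedding.induce _).isContained)
  simp only [coe_sort_coe, Fintype.card_coe] at mantel
  linarith

end EdgeCounts

section OddLoops

variable {V : Type*} {G : SimpleGraph V} {v : V}

lemma five_le_length_of_odd_of_cliqueFree (h : G.CliqueFree 3) (p : G.Walk v v)
    (hodd : Odd p.length) : 5 ≤ p.length := by
  classical
  match p, hodd with
  | .cons hvv .nil, _ => exact (G.irrefl hvv).elim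
  | .cons hab (.cons hbc (.cons hca .nil)), _ =>
    exact (h _ (is3Clique_triple_iff.2 ⟨hab, hca.symm, hbc⟩)).elim
  | .cons _ (.cons _ (.cons _ (.cons _ (.cons _ _)))), _ => simp
  | .nil, hodd | .cons _ (.cons _ .nil), hodd | .cons _ (.cons _ (.cons _ (.cons _ .nil))), hodd =>
    simp +decide at hodd

/-- An odd closed walk of minimum length among all odd closed walks of the graph, whatever their
base point. Its length is the odd girth of the graph. -/
structure IsShortestOddLoop (p : G.Walk v v) : Prop where
  odd_length : Odd p.length
  length_le {w : V} (q : G.Walk w w) (hq : Odd q.length) : p.length ≤ q.length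

lemma exists_isShortestOddLoop (h : ¬ G.Colorable 2) :
    ∃ (v : V) (p : G.Walk v v), IsShortestOddLoop p := by
  let oddLengths := {l | ∃ (v : V) (p : G.Walk v v), Odd p.length ∧ p.length = l}
  have nonempty : oddLengths.Nonempty := by
    simp only [two_colorable_iff_forall_loop_even, not_forall, Nat.not_even_iff_odd] at h
    obtain ⟨v, p, hp⟩ := h
    exact ⟨_, v, p, hp, rfl⟩
  obtain ⟨v, p, hodd, hmin⟩ := Nat.sInf_mem nonempty
  exact ⟨v, p, hodd, fun q hq ↦ hmin.trans_le (Nat.sInf_le ⟨_, q, hq, rfl⟩)⟩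

lemma toFinset_support_eq_image_getVert [DecidableEq V] {p : G.Walk v v} (hp : 0 < p.length) :
    p.support.toFinset = (range p.length).image p.getVert := by
  ext w
  simp only [List.mem_toFinset, Walk.mem_support_iff_exists_getVert, mem_image, mem_range]
  refine ⟨?_, fun ⟨i, hi, hw⟩ ↦ ⟨i, hw, hi.le⟩⟩
  rintro ⟨i, rfl, hi⟩
  obtain hi | rfl := hi.lt_or_eq
  · exact ⟨i, hi, rfl⟩
  · exact ⟨0, hp, by simp⟩

namespace IsShortestOddLoop

variable {p : G.Walk v v} {i j k : ℕ}

lemma sub_le_length_of_even (hp : IsShortestOddLoop p) (hij : i ≤ j) (hj : j ≤ p.length)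
    (q : G.Walk (p.getVert i) (p.getVert j)) (hq : Even (q.length + (j - i))) :
    j - i ≤ q.length := by
  have length_shortcut := hp.length_le (((p.take i).append q).append (p.drop j))
  have hodd := hp.odd_length
  simp only [Walk.length_append, Walk.take_length, Walk.drop_length] at length_shortcut
  grind

lemma length_le_add_sub_of_odd (hp : IsShortestOddLoop p) (hij : i ≤ j) (hj : j ≤ p.length)
    (q : G.Walk (p.getVert i) (p.getVert j)) (hq : Odd (q.length + (j - i))) :
    p.length ≤ q.length + (j - i) := by
  have getVert_arc : (p.drop i).getVert (j - i) = p.getVert j := by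
    rw [Walk.drop_getVert, Nat.add_sub_cancel' hij]
  let arc := ((p.drop i).take (j - i)).copy rfl getVert_arc
  have length_arc : arc.length = j - i := by
    simp only [arc, Walk.length_copy, Walk.take_length, Walk.drop_length]
    omega
  simpa [length_arc] using hp.length_le (q.append arc.reverse) (by simpa [length_arc] using hq)

lemma getVert_injOn (hp : IsShortestOddLoop p) : Set.InjOn p.getVert (Set.Iio p.length) := by
  intro i hi j hj hij
  wlog hle : i ≤ j generalizing i j
  · exact (this hj hi hij.symm (Nat.le_of_not_le hle)).symm
  let q : G.Walk (p.getVert i) (p.getVert j) := Walk.nil.copy rfl hij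
  have length_q : q.length = 0 := by simp [q]
  rw [Set.mem_Iio] at hj
  obtain heven | hodd := (q.length + (j - i)).even_or_odd
  · have := hp.sub_le_length_of_even hle hj.le q heven
    omega
  · have := hp.length_le_add_sub_of_odd hle hj.le q hodd
    omega

lemma card_toFinset_support [DecidableEq V] (hp : IsShortestOddLoop p) :
    #p.support.toFinset = p.length := by
  rw [toFinset_support_eq_image_getVert hp.odd_length.pos,
    card_image_of_injOn (by simpa using hp.getVert_injOn), card_range]

lemma eq_add_two_or_of_adj (hp : IsShortestOddLoop p) {u : V} (hij : i < j) (hj : j < p.length)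
    (hui : G.Adj u (p.getVert i)) (huj : G.Adj u (p.getVert j)) :
    j = i + 2 ∨ j + 2 = i + p.length := by
  let q : G.Walk (p.getVert i) (p.getVert j) := .cons hui.symm huj.toWalk
  have length_q : q.length = 2 := by simp [q]
  have hodd := hp.odd_length
  obtain hq | hq := (q.length + (j - i)).even_or_odd
  · have := hp.sub_le_length_of_even hij.le hj.le q hq
    grind
  · have := hp.length_le_add_sub_of_odd hij.le hj.le q hq
    grind

lemma not_adj_of_adj_of_adj (hp : IsShortestOddLoop p) (hlen : 5 ≤ p.length) {u : V}
    (hij : i < j) (hjk : j < k) (hk : k < p.length)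
    (hui : G.Adj u (p.getVert i)) (huj : G.Adj u (p.getVert j)) : ¬ G.Adj u (p.getVert k) := by
  intro huk
  have hodd := hp.odd_length
  have dist_ij := hp.eq_add_two_or_of_adj hij (hjk.trans hk) hui huj
  have dist_jk := hp.eq_add_two_or_of_adj hjk hk huj huk
  have dist_ik := hp.eq_add_two_or_of_adj (hij.trans hjk) hk hui huk
  grind

lemma card_neighborFinset_inter_le_two [Fintype V] [DecidableEq V] [DecidableRel G.Adj]
    (hp : IsShortestOddLoop p) (hlen : 5 ≤ p.length) (u : V) :
    #(G.neighborFinset u ∩ p.support.toFinset) ≤ 2 := by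
  let indices := {i ∈ range p.length | G.Adj u (p.getVert i)}
  have inter_eq : G.neighborFinset u ∩ p.support.toFinset = indices.image p.getVert := by
    rw [toFinset_support_eq_image_getVert hp.odd_length.pos]
    grind [mem_neighborFinset]
  rw [inter_eq]
  refine card_image_le.trans ?_
  by_contra! three_le
  obtain ⟨triple, subset, card_triple⟩ := exists_subset_card_eq (Nat.succ_le_of_lt three_le)
  let index := triple.orderEmbOfFin card_triple
  have mem (a : Fin 3) : index a < p.length ∧ G.Adj u (p.getVert (index a)) := by
    simpa [indices] using subset (triple.orderEmbOfFin_mem card_triple a)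
  exact hp.not_adj_of_adj_of_adj hlen (index.strictMono (by decide : (0 : Fin 3) < 1))
    (index.strictMono (by decide : (1 : Fin 3) < 2)) (mem 2).1 (mem 0).2 (mem 1).2 (mem 2).2

lemma length_le_card [Fintype V] (hp : IsShortestOddLoop p) : p.length ≤ Fintype.card V := by
  classical
  exact hp.card_toFinset_support ▸ card_le_univ _

lemma four_mul_card_edgeFinset_le [Fintype V] [DecidableRel G.Adj] (hp : IsShortestOddLoop p)
    (h : G.CliqueFree 3) :
    (4 * #G.edgeFinset : ℤ) ≤ (Fintype.card V - (p.length - 4)) ^ 2 + 4 * (p.length - 4) := by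
  classical
  have hlen := five_le_length_of_odd_of_cliqueFree h p hp.odd_length
  have count := four_mul_card_edgeFinset_le_of_card_neighborFinset_inter_le h
    (hp.card_neighborFinset_inter_le_two hlen)
  have card_compl := card_add_card_compl p.support.toFinset
  rw [hp.card_toFinset_support] at card_compl
  rw [← card_compl] at count ⊢
  zify at count
  push_cast
  linarith

end IsShortestOddLoop

end OddLoops

/-- Erdős (1962): a triangle-free graph on `n` vertices that is not bipartite
(i.e. not 2-colorable) has at most `(n-1)²/4 + 1` edges, equivalently
`4·e(G) ≤ (n-1)² + 4`. -/
theorem stmt_0 {V : Type*} [Fintype V] [DecidableEq V] (G : SimpleGraph V)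
    [DecidableRel G.Adj]
    (htriangleFree : G.CliqueFree 3)
    (hnotBipartite : ¬ G.Colorable 2) :
    (4 * G.edgeFinset.card : ℤ) ≤ ((Fintype.card V : ℤ) - 1) ^ 2 + 4 := by
  obtain ⟨v, p, hp⟩ := exists_isShortestOddLoop hnotBipartite
  have five_le : (5 : ℤ) ≤ p.length :=
    mod_cast five_le_length_of_odd_of_cliqueFree htriangleFree p hp.odd_length
  have le_card : (p.length : ℤ) ≤ Fintype.card V := mod_cast hp.length_le_card
  calc (4 * #G.edgeFinset : ℤ)
      ≤ (Fintype.card V - (p.length - 4)) ^ 2 + 4 * (p.length - 4) :=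
        hp.four_mul_card_edgeFinset_le htriangleFree
    _ ≤ (Fintype.card V - 1) ^ 2 + 4 := by
        nlinarith [mul_nonneg (sub_nonneg.2 five_le)
          (by linarith : (0 : ℤ) ≤ 2 * Fintype.card V - p.length - 1)]
end

section
/- Let G be a finite simple graph that is claw-free (no induced K_{1,3}), and let v be a vertex of G of degree k such that the complement of the induced subgraph G[N(v)] on the open neighborhood N(v) is not bipartite. Then 4·e(G[N[v]]) ≥ 4k + 2k(k−1) − (k−1)² − 4 (equivalently, e(G[N[v]]) ≥ k + C(k,2) − ((k−1)²/4 + 1)). -/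
/-!
Let `H` be the complement of `G[N(v)]`, a graph on `k` vertices. Claw-freeness at `v` makes `H`
triangle-free, and `e(G[N[v]]) = k + C(k,2) - e(H)`, so the claim is the bound
`4 e(H) ≤ (k-1)² + 4` for a triangle-free non-bipartite graph `H` on `k` vertices.

For that bound, let `x` have maximum degree `Δ` in `H`. The set `N(x)` is independent, so, `H` not
being bipartite, some edge `yz` avoids `N(x)`. Every edge of `H` meets one of the `k - Δ - 2`
vertices outside `N(x) ∪ {y, z}`, or is `yz`, or joins `{y, z}` to `N(x)`. There are at most `Δ`
edges of the last kind, because `y` and `z` have no common neighbour. Hence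
`e(H) ≤ Δ(k - Δ - 2) + Δ + 1 = Δ(k - 1 - Δ) + 1 ≤ (k-1)²/4 + 1`.
-/

open Finset

section EdgeCount

variable {V : Type*} (G : SimpleGraph V)

lemma image_edgeSet_induce (s : Set V) :
    Sym2.map (↑) '' (G.induce s).edgeSet = G.edgeSet ∩ s.sym2 := by
  ext ⟨a, b⟩
  constructor
  · rintro ⟨⟨c, d⟩, hcd, h⟩
    rw [← h]
    exact ⟨hcd, c.2, d.2⟩
  · rintro ⟨hab, ha, hb⟩
    exact ⟨s(⟨a, ha⟩, ⟨b, hb⟩), hab, rfl⟩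

lemma ncard_edgeSet_induce (s : Set V) :
    (G.induce s).edgeSet.ncard = (G.edgeSet ∩ s.sym2).ncard := by
  rw [← image_edgeSet_induce,
    Set.ncard_image_of_injective _ (Sym2.map.injective Subtype.val_injective)]

lemma edgeSet_inter_sym2_insert (v : V) (s : Set V) :
    G.edgeSet ∩ (insert v s).sym2 =
      (fun a ↦ s(v, a)) '' (G.neighborSet v ∩ s) ∪ G.edgeSet ∩ s.sym2 := by
  rw [Set.sym2_insert, Set.inter_union_distrib_left]
  congr 1
  ext e
  constructor
  · rintro ⟨hva, a, rfl | ha, rfl⟩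
    · exact (G.irrefl hva).elim
    · exact ⟨a, ⟨hva, ha⟩, rfl⟩
  · rintro ⟨a, ⟨hva, ha⟩, rfl⟩
    exact ⟨hva, a, Set.mem_insert_of_mem v ha, rfl⟩

lemma ncard_edgeSet_induce_insert {v : V} {s : Set V} (hs : s.Finite) (hv : v ∉ s) :
    (G.induce (insert v s)).edgeSet.ncard =
      (G.neighborSet v ∩ s).ncard + (G.induce s).edgeSet.ncard := by
  have : Finite s := hs
  have hdisj : Disjoint ((fun a ↦ s(v, a)) '' (G.neighborSet v ∩ s)) (G.edgeSet ∩ s.sym2) := by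
    rw [Set.disjoint_left]
    rintro _ ⟨a, -, rfl⟩ ⟨-, hvs, -⟩
    exact hv hvs
  rw [ncard_edgeSet_induce, edgeSet_inter_sym2_insert,
    Set.ncard_union_eq hdisj ((hs.inter_of_right _).image _)
      (image_edgeSet_induce G s ▸ Set.toFinite _),
    Set.ncard_image_of_injective _ fun _ _ ↦ Sym2.congr_right.1, ncard_edgeSet_induce]

lemma indepSetFree_three_induce_neighborSet {v : V}
    (hv : ∀ x y z : V, x ≠ y → x ≠ z → y ≠ z → G.Adj v x → G.Adj v y → G.Adj v z →
      G.Adj x y ∨ G.Adj x z ∨ G.Adj y z) :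
    (G.induce (G.neighborSet v)).IndepSetFree 3 := by
  classical
  intro s hs
  obtain ⟨a, b, c, hab, hac, hbc, rfl⟩ := card_eq_three.1 hs.card_eq
  have hnonadj := hs.isIndepSet
  rcases hv a b c (Subtype.coe_ne_coe.2 hab) (Subtype.coe_ne_coe.2 hac) (Subtype.coe_ne_coe.2 hbc)
    a.2 b.2 c.2 with h | h | h
  · exact hnonadj (by simp) (by simp) hab h
  · exact hnonadj (by simp) (by simp) hac h
  · exact hnonadj (by simp) (by simp) hbc h

lemma ncard_edgeSet_add_ncard_edgeSet_compl [Finite V] :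
    G.edgeSet.ncard + Gᶜ.edgeSet.ncard = (Nat.card V).choose 2 := by
  classical
  have := Fintype.ofFinite V
  rw [← Set.ncard_union_eq (SimpleGraph.disjoint_edgeSet.2 disjoint_compl_right),
    ← SimpleGraph.edgeSet_sup, sup_compl_eq_top, Nat.card_eq_fintype_card,
    ← SimpleGraph.card_edgeFinset_top_eq_card_choose_two, ← SimpleGraph.coe_edgeFinset,
    Set.ncard_coe_finset]

end EdgeCount

section IndepSet

variable {W : Type*} {H : SimpleGraph W}

lemma exists_adj_notMem_of_isIndepSet {s : Set W} (hs : H.IsIndepSet s) (hH : ¬ H.IsBipartite) :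
    ∃ y ∉ s, ∃ z ∉ s, H.Adj y z := by
  by_contra! hcover
  refine hH (SimpleGraph.IsBipartiteWith.isBipartite (s := s) (t := sᶜ)
    ⟨disjoint_compl_right, fun a b hab ↦ ?_⟩)
  by_cases ha : a ∈ s
  · exact .inl ⟨ha, fun hb ↦ hs ha hb hab.ne hab⟩
  · exact .inr ⟨ha, by_contra fun hb ↦ hcover a ha b hb hab⟩

variable [DecidableEq W]

lemma card_edgeFinset_le_sum_degree_compl_add [Fintype W] [DecidableRel H.Adj] (s : Finset W) :
    #H.edgeFinset ≤ ∑ w ∈ sᶜ, H.degree w + #(H.edgeFinset ∩ s.sym2) := by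
  have hcover : H.edgeFinset ⊆ sᶜ.biUnion (fun w ↦ H.incidenceFinset w) ∪
      (H.edgeFinset ∩ s.sym2) := by
    intro e he
    by_cases hes : e ∈ s.sym2
    · exact mem_union_right _ (mem_inter.2 ⟨he, hes⟩)
    · obtain ⟨w, hwe, hws⟩ : ∃ w ∈ e, w ∉ s := by simpa [mem_sym2_iff] using hes
      refine mem_union_left _ (mem_biUnion.2 ⟨w, mem_compl.2 hws, ?_⟩)
      rw [SimpleGraph.mem_incidenceFinset]
      exact ⟨SimpleGraph.mem_edgeFinset.1 he, hwe⟩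
  calc #H.edgeFinset
    _ ≤ #(sᶜ.biUnion fun w ↦ H.incidenceFinset w) + #(H.edgeFinset ∩ s.sym2) :=
      (card_le_card hcover).trans (card_union_le _ _)
    _ ≤ ∑ w ∈ sᶜ, #(H.incidenceFinset w) + #(H.edgeFinset ∩ s.sym2) := by
      gcongr
      exact card_biUnion_le
    _ = ∑ w ∈ sᶜ, H.degree w + #(H.edgeFinset ∩ s.sym2) := by
      simp only [SimpleGraph.card_incidenceFinset_eq_degree]

lemma card_edgeFinset_inter_sym2_insert_insert_le [Fintype H.edgeSet] {t : Finset W}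
    (ht : H.IsIndepSet t) {y z : W} (hyz : ∀ a ∈ t, H.Adj y a → ¬ H.Adj z a) :
    #(H.edgeFinset ∩ (insert y (insert z t)).sym2) ≤ #t + 1 := by
  classical
  -- Besides `yz`, each edge has an endpoint in `t`, which determines the other endpoint.
  let edgeAt (a : W) : Sym2 W := if H.Adj y a then s(y, a) else s(z, a)
  have hedgeAt : ∀ u a, u = y ∨ u = z → a ∈ t → H.Adj u a → edgeAt a = s(u, a) := by
    rintro u a (rfl | rfl) ha hua
    · exact if_pos hua
    · exact if_neg fun hya ↦ hyz a ha hya hua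
  have hcover : H.edgeFinset ∩ (insert y (insert z t)).sym2 ⊆ insert s(y, z) (t.image edgeAt) := by
    rintro ⟨a, b⟩ he
    obtain ⟨hab, ha, hb⟩ : H.Adj a b ∧ a ∈ insert y (insert z t) ∧ b ∈ insert y (insert z t) := by
      simpa only [mem_inter, SimpleGraph.mem_edgeFinset, SimpleGraph.mem_edgeSet,
        mk_mem_sym2_iff] using he
    simp only [mem_insert, ← or_assoc] at ha hb
    rw [mem_insert, mem_image]
    rcases ha with ha | ha <;> rcases hb with hb | hb
    · left
      have hne := hab.ne
      grind
    · exact .inr ⟨b, hb, hedgeAt a b ha hb hab⟩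
    · exact .inr ⟨a, ha, (hedgeAt b a hb ha hab.symm).trans Sym2.eq_swap⟩
    · exact (ht ha hb hab.ne hab).elim
  calc #(H.edgeFinset ∩ (insert y (insert z t)).sym2)
    _ ≤ #(insert s(y, z) (t.image edgeAt)) := card_le_card hcover
    _ ≤ #(t.image edgeAt) + 1 := card_insert_le _ _
    _ ≤ #t + 1 := by
      gcongr
      exact card_image_le

end IndepSet

lemma four_mul_ncard_edgeSet_le_of_cliqueFree_three {W : Type*} [Finite W] {H : SimpleGraph W}
    (htri : H.CliqueFree 3) (hH : ¬ H.IsBipartite) :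
    4 * (H.edgeSet.ncard : ℤ) ≤ ((Nat.card W : ℤ) - 1) ^ 2 + 4 := by
  classical
  have := Fintype.ofFinite W
  have : Nonempty W := not_isEmpty_iff.1 fun _ ↦ hH (SimpleGraph.Colorable.of_isEmpty 2)
  obtain ⟨x, hx⟩ := H.exists_maximal_degree_vertex
  have hindep := H.isIndepSet_neighborSet_of_triangleFree htri
  obtain ⟨y, hxy, z, hxz, hyz⟩ := exists_adj_notMem_of_isIndepSet (hindep x) hH
  let s := insert y (insert z (H.neighborFinset x))
  have hs : #s = H.maxDegree + 2 := by
    rw [card_insert_of_notMem (by simpa [hyz.ne] using hxy),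
      card_insert_of_notMem (by simpa using hxz), SimpleGraph.card_neighborFinset_eq_degree, ← hx]
  have hinside : #(H.edgeFinset ∩ s.sym2) ≤ H.maxDegree + 1 := by
    rw [hx, ← SimpleGraph.card_neighborFinset_eq_degree]
    exact card_edgeFinset_inter_sym2_insert_insert_le (by simpa using hindep x)
      fun a _ hya hza ↦ hindep a hya.symm hza.symm hyz.ne hyz
  have hedges : #H.edgeFinset ≤ #sᶜ * H.maxDegree + (H.maxDegree + 1) :=
    (card_edgeFinset_le_sum_degree_compl_add s).trans
      (add_le_add (sum_le_card_nsmul _ _ _ fun w _ ↦ H.degree_le_maxDegree w) hinside)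
  have hcard : Nat.card W = #sᶜ + H.maxDegree + 2 := by
    rw [Nat.card_eq_fintype_card, ← card_add_card_compl s, hs]
    ring
  rw [← SimpleGraph.coe_edgeFinset, Set.ncard_coe_finset, hcard]
  zify at hedges
  calc 4 * (#H.edgeFinset : ℤ)
    _ ≤ 4 * ((#sᶜ : ℤ) + 1) * H.maxDegree + 4 := by linarith
    _ ≤ ((#sᶜ : ℤ) + 1 + H.maxDegree) ^ 2 + 4 := by
      gcongr
      exact four_mul_le_sq_add _ _
    _ = _ := by
      push_cast
      ring

theorem stmt_4_general {V : Type*} (G : SimpleGraph V) (v : V) [Fintype (G.neighborSet v)]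
    (hv : (G.induce (G.neighborSet v)).IndepSetFree 3) (k : ℕ) (hk : G.degree v = k)
    (hnotBipartite : ¬ ((G.induce (G.neighborSet v))ᶜ).Colorable 2) :
    (4 * (G.induce (insert v (G.neighborSet v))).edgeSet.ncard : ℤ) ≥
      4 * (k : ℤ) + 2 * (k : ℤ) * ((k : ℤ) - 1) - ((k : ℤ) - 1) ^ 2 - 4 := by
  have hcard : Nat.card (G.neighborSet v) = k := by
    rw [Nat.card_eq_fintype_card, G.card_neighborSet_eq_degree, hk]
  have hclosed : (G.induce (insert v (G.neighborSet v))).edgeSet.ncard =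
      k + (G.induce (G.neighborSet v)).edgeSet.ncard := by
    rw [ncard_edgeSet_induce_insert G (Set.toFinite _) G.notMem_neighborSet_self,
      Set.inter_self, ← Nat.card_coe_set_eq, hcard]
  have hcompl := ncard_edgeSet_add_ncard_edgeSet_compl (G.induce (G.neighborSet v))
  have hbound := four_mul_ncard_edgeSet_le_of_cliqueFree_three
    ((SimpleGraph.cliqueFree_compl _).2 hv) hnotBipartite
  have hchoose : (k : ℤ) * (k - 1) = 2 * k.choose 2 := by
    rw [← Nat.cast_descFactorial_two, Nat.descFactorial_eq_factorial_mul_choose]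
    simp
  rw [hcard] at hcompl hbound
  zify at hclosed hcompl
  linarith

/-- If `G` is claw-free and `v` is a vertex of degree `k` such that the
complement of the subgraph induced on `N(v)` is not bipartite, then
`4·e(G[N[v]]) ≥ 4k + 2k(k-1) − (k-1)² − 4`. -/
theorem stmt_4 {V : Type*} [Fintype V] (G : SimpleGraph V) [DecidableRel G.Adj]
    (hclawFree : ∀ u x y z : V, x ≠ y → x ≠ z → y ≠ z →
      G.Adj u x → G.Adj u y → G.Adj u z →
      (G.Adj x y ∨ G.Adj x z ∨ G.Adj y z))
    (v : V) (k : ℕ) (hk : G.degree v = k)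
    (hnotBipartite : ¬ ((G.induce (G.neighborSet v))ᶜ).Colorable 2) :
    (4 * (G.induce (insert v (G.neighborSet v))).edgeSet.ncard : ℤ) ≥
      4 * (k : ℤ) + 2 * (k : ℤ) * ((k : ℤ) - 1) - ((k : ℤ) - 1) ^ 2 - 4 := by
  exact stmt_4_general G v (indepSetFree_three_induce_neighborSet G (hclawFree v)) k hk
    hnotBipartite
end
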